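/- Fix n : ℕ, i : Fin (n+1), level functions c, c' : Fin (n+1) → ℝ, a matrix g : Fin (n+1) → Fin (n+1) → ℝ and a threshold r : ℝ. Define σ_B := {q : (Fin (n+1) → ℝ) × (Fin (n+1) → ℝ) | writing a := q.1, b := q.2: (∀ l, a i + b i ≤ a l + b l) ∧ (∀ j k, c j ≤ c k → a j ≤ a k) ∧ (∀ j k, c' j ≤ c' k → b j ≤ b k) ∧ (∀ j k, g j k ≤ r → a i + b i ≤ a j + b k) ∧ (∀ j k, r ≤ g j k → a j + b k ≤ a i + b i)}. For j, k : Fin (n+1) define λ_{j,k} := {q : ((Fin (n+1) → ℝ) × (Fin (n+1) → ℝ)) × (ℝ × ℝ) | writing a := q.1.1, b := q.1.2, x := q.2.1, y := q.2.2: (∀ l, a i + b i ≤ a l + b l) ∧ (∀ l, (c l ≤ c j → a l ≤ x) ∧ (c j ≤ c l → x ≤ a l)) ∧ (∀ l, (c' l ≤ c' k → b l ≤ y) ∧ (c' k ≤ c' l → y ≤ b l)) ∧ (g j k ≤ r → a i + b i ≤ x + y) ∧ (r ≤ g j k → x + y ≤ a i + b i)}. Then σ_B = ⋂_{j} ⋂_{k}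 (Prod.fst '' λ_{j,k}). -/

import Mathlib

/-!
The level conditions of the scaffold cone `λ_{j,k}` at `l = j` and `l = k` force `x = a j` and
`y = b k`, so each point of its projection has exactly one lift. Substituting this lift turns the
conditions of `λ_{j,k}` into those conditions of the bipermutahedral cone that involve `a j`, `b k`
or `a j + b k`; ranging over all `(j, k)` recovers all of them.
-/

variable {ι M α β γ : Type*}

/-- `AtLevel c a j x` says that the value `x` sits at the level of `a j` among the values of `a`,
when these are compared as prescribed by the level function `c`. -/
def AtLevel [LE α] [LE M] (c : ι → α) (a : ι → M) (j : ι) (x : M) : Prop :=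
  ∀ l, (c l ≤ c j → a l ≤ x) ∧ (c j ≤ c l → x ≤ a l)

theorem AtLevel.eq_apply [Preorder α] [PartialOrder M] {c : ι → α} {a : ι → M} {j : ι} {x : M}
    (h : AtLevel c a j x) : x = a j :=
  le_antisymm ((h j).2 le_rfl) ((h j).1 le_rfl)

theorem forall_atLevel_apply_iff [LE α] [LE M] {c : ι → α} {a : ι → M} :
    (∀ j, AtLevel c a j (a j)) ↔ ∀ j k, c j ≤ c k → a j ≤ a k :=
  ⟨fun h j k => (h j k).2, fun h j l => ⟨h l j, h j l⟩⟩

/-- The cone `σ_B` of the bipermutahedral fan `Σ_{n,n}`, for an arbitrary index type `ι` in place of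
`Fin (n + 1)`: the level functions `c` and `c'` prescribe the comparisons of the `a`'s and of the
`b`'s, and the position of `g j k` relative to `r` that of `a j + b k` with `a i + b i`. -/
def bipermutahedralCone [LE α] [LE β] [LE γ] [Add M] [LE M] (i : ι) (c : ι → α) (c' : ι → β)
    (g : ι → ι → γ) (r : γ) : Set ((ι → M) × (ι → M)) :=
  {q | (∀ l, q.1 i + q.2 i ≤ q.1 l + q.2 l) ∧
    (∀ j k, c j ≤ c k → q.1 j ≤ q.1 k) ∧
    (∀ j k, c' j ≤ c' k → q.2 j ≤ q.2 k) ∧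
    (∀ j k, g j k ≤ r → q.1 i + q.2 i ≤ q.1 j + q.2 k) ∧
    (∀ j k, r ≤ g j k → q.1 j + q.2 k ≤ q.1 i + q.2 i)}

/-- The cone `λ_{j,k}` of the bipermutahedral scaffold `Λ_B`, in the universal family: a point is a
configuration `(a, b)` paired with the auxiliary point `(x, y)`. -/
def scaffoldCone [LE α] [LE β] [LE γ] [Add M] [LE M] (i : ι) (c : ι → α) (c' : ι → β)
    (g : ι → ι → γ) (r : γ) (j k : ι) : Set (((ι → M) × (ι → M)) × (M × M)) :=
  {q | (∀ l, q.1.1 i + q.1.2 i ≤ q.1.1 l + q.1.2 l) ∧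
    AtLevel c q.1.1 j q.2.1 ∧
    AtLevel c' q.1.2 k q.2.2 ∧
    (g j k ≤ r → q.1.1 i + q.1.2 i ≤ q.2.1 + q.2.2) ∧
    (r ≤ g j k → q.2.1 + q.2.2 ≤ q.1.1 i + q.1.2 i)}

section Projection

variable [Preorder α] [Preorder β] [LE γ] [Add M] [PartialOrder M] {i j k : ι} {c : ι → α}
  {c' : ι → β} {g : ι → ι → γ} {r : γ} {q : (ι → M) × (ι → M)}

theorem eq_apply_of_mem_scaffoldCone {p : M × M}
    (h : (q, p) ∈ scaffoldCone i c c' g r j k) :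
    p = (q.1 j, q.2 k) :=
  Prod.ext h.2.1.eq_apply h.2.2.1.eq_apply

theorem mem_fst_image_scaffoldCone :
    q ∈ Prod.fst '' scaffoldCone i c c' g r j k ↔
      (q, (q.1 j, q.2 k)) ∈ scaffoldCone i c c' g r j k := by
  refine ⟨?_, fun h => ⟨_, h, rfl⟩⟩
  rintro ⟨⟨q, p⟩, h, rfl⟩
  obtain rfl := eq_apply_of_mem_scaffoldCone h
  exact h

end Projection

theorem mem_bipermutahedralCone_iff_forall_mem_scaffoldCone [LE α] [LE β] [LE γ] [Add M] [LE M]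
    {i : ι} {c : ι → α} {c' : ι → β} {g : ι → ι → γ} {r : γ} {q : (ι → M) × (ι → M)} :
    q ∈ bipermutahedralCone i c c' g r ↔
      ∀ j k, (q, (q.1 j, q.2 k)) ∈ scaffoldCone i c c' g r j k := by
  have : Nonempty ι := ⟨i⟩
  simp only [bipermutahedralCone, scaffoldCone, Set.mem_ofPred_eq, forall_and, forall_const,
    forall_atLevel_apply_iff]

theorem bipermutahedral_cone_eq_iInter_proj_scaffold_general [Preorder α] [Preorder β] [LE γ]
    [Add M] [PartialOrder M] (i : ι) (c : ι → α) (c' : ι → β) (g : ι → ι → γ) (r : γ) :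
    (bipermutahedralCone i c c' g r : Set ((ι → M) × (ι → M))) =
      ⋂ j, ⋂ k, Prod.fst '' scaffoldCone i c c' g r j k := by
  ext q
  simp only [Set.mem_iInter, mem_fst_image_scaffoldCone,
    mem_bipermutahedralCone_iff_forall_mem_scaffoldCone]

/-- The refinement half of the identification of the configuration fan `Π_{Λ_B}` with the
bipermutahedral fan `Σ_{n,n}`: every cone of `Σ_{n,n}` is exactly the intersection, over
all pairs `(j, k)`, of the projections of the corresponding scaffold cones. -/
theorem bipermutahedral_cone_eq_iInter_proj_scaffold (n : ℕ) (i : Fin (n + 1))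
    (c c' : Fin (n + 1) → ℝ) (g : Fin (n + 1) → Fin (n + 1) → ℝ) (r : ℝ) :
    {q : (Fin (n + 1) → ℝ) × (Fin (n + 1) → ℝ) |
        (∀ l, q.1 i + q.2 i ≤ q.1 l + q.2 l) ∧
        (∀ j k, c j ≤ c k → q.1 j ≤ q.1 k) ∧
        (∀ j k, c' j ≤ c' k → q.2 j ≤ q.2 k) ∧
        (∀ j k, g j k ≤ r → q.1 i + q.2 i ≤ q.1 j + q.2 k) ∧
        (∀ j k, r ≤ g j k → q.1 j + q.2 k ≤ q.1 i + q.2 i)} =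
      ⋂ j : Fin (n + 1), ⋂ k : Fin (n + 1),
        Prod.fst '' {q : ((Fin (n + 1) → ℝ) × (Fin (n + 1) → ℝ)) × (ℝ × ℝ) |
          (∀ l, q.1.1 i + q.1.2 i ≤ q.1.1 l + q.1.2 l) ∧
          (∀ l, (c l ≤ c j → q.1.1 l ≤ q.2.1) ∧ (c j ≤ c l → q.2.1 ≤ q.1.1 l)) ∧
          (∀ l, (c' l ≤ c' k → q.1.2 l ≤ q.2.2) ∧ (c' k ≤ c' l → q.2.2 ≤ q.1.2 l)) ∧
          (g j k ≤ r → q.1.1 i + q.1.2 i ≤ q.2.1 + q.2.2) ∧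
          (r ≤ g j k → q.2.1 + q.2.2 ≤ q.1.1 i + q.1.2 i)} :=
  bipermutahedral_cone_eq_iInter_proj_scaffold_general i c c' g r
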